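/- Fix a ∈ ℝ and let (Φ, W, Ψ, θ) be a solution of system (D) defined for all τ ∈ ℝ with Φ(τ) > 0 and θ(τ) ∈ (−π/2, π/2) for all τ. Suppose liminf_{τ→−∞} Φ(τ) < ∞ and limsup_{τ→−∞} ( Φ(τ) + |W(τ)| + |Ψ(τ)| ) = ∞. Then there exists a strictly decreasing sequence (τₙ) with τₙ → −∞ such that limsup_{n→∞} Φ(τₙ) ≤ 1 and, for every n, W(τₙ) = 0 and Ψ(τₙ) ≥ 0. -/

import Mathlib

open Filter Set

/-- The right-hand side of the `Ψ` equation in system (D). -/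
noncomputable def dPsi (a Φ W Ψ θ : ℝ) : ℝ :=
  1 / Φ ^ 3 - 1 - (a - 1) * Real.cos θ ^ 2 -
    (((16 / 3) * Real.sin θ - (224 / 27) * Real.sin θ ^ 3) * Real.cos θ ^ ((17 : ℝ) / 3) * Φ
      + ((208 / 81) * Real.sin θ ^ 2 - 10 / 9) * Real.cos θ ^ ((34 : ℝ) / 9) * W
      + (2 / 3) * Real.sin θ * Real.cos θ ^ ((17 : ℝ) / 9) * Ψ)

/-- `(Φ, W, Ψ, θ)` is a solution of system (D) on all of `ℝ`. -/
noncomputable def SolD (a : ℝ) (Φ W Ψ θ : ℝ → ℝ) : Prop :=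
  ∀ τ : ℝ,
    HasDerivAt Φ (W τ) τ ∧
    HasDerivAt W (Ψ τ) τ ∧
    HasDerivAt Ψ (dPsi a (Φ τ) (W τ) (Ψ τ) (θ τ)) τ ∧
    HasDerivAt θ (Real.cos (θ τ) ^ ((26 : ℝ) / 9)) τ

/-!
In the variables `x = tan θ` and `H = (cos θ)^(2/3) Φ` the system becomes the thin-film equation
`d³H/dx³ = H⁻³ - x² - a`, whose right-hand side is `(Φ⁻³ - 1) (1 + x²) + 1 - a`; moreover
`x → -∞` as `τ → -∞`. If `Φ ≥ c > 1` near `-∞`, then three integrations give `H → ∞`, hence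
`Φ → ∞`, which the finite lower limit excludes; if `Φ ≤ c < 1` near `-∞`, they give `H → -∞`,
which positivity excludes. So `Φ` is frequently below every `c > 1` and frequently above every
`c < 1`.

If `Φ` stayed in a compact subinterval of `(0, ∞)`, interpolation on unit intervals would bound `W`
and `Ψ`, because the lower order terms in the `Ψ` equation carry a factor tending to `0`. Hence `Φ`
also frequently leaves `[1/2, c]`. Either way it crosses some level at most `c` infinitely often,
and each dip below that level contains a local minimum of `Φ`.
-/

open scoped Topology

section Sequences

lemma frequently_atBot_isLocalMin_lt {α β : Type*} [ConditionallyCompleteLinearOrder α]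
    [TopologicalSpace α] [OrderTopology α] [NoMinOrder α] [Nonempty α] [LinearOrder β]
    [TopologicalSpace β] [ClosedIicTopology β] {f : α → β} {c : β} (hf : Continuous f)
    (hlt : ∃ᶠ τ in atBot, f τ < c) (hgt : ∃ᶠ τ in atBot, c < f τ) :
    ∃ᶠ τ in atBot, IsLocalMin f τ ∧ f τ < c := by
  rw [frequently_atBot'] at *
  intro T
  obtain ⟨v, hvT, hv⟩ := hgt T
  obtain ⟨s, hsv, hs⟩ := hlt v
  obtain ⟨u, hus, hu⟩ := hgt s
  have hends : ∀ z ∈ Icc u v \ Ioo u v, f s < f z := by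
    rw [Icc_sdiff_Ioo_same (hus.trans hsv).le]
    rintro z (rfl | rfl)
    exacts [hs.trans hu, hs.trans hv]
  obtain ⟨m, hm, hmin⟩ := isCompact_Icc.exists_isMinOn_mem_subset hf.continuousOn
    ⟨hus.le, hsv.le⟩ hends
  exact ⟨m, hm.2.trans hvT, hmin.isLocalMin (Icc_mem_nhds hm.1 hm.2),
    (hmin ⟨hus.le, hsv.le⟩).trans_lt hs⟩

lemma exists_strictAnti_seq_limsup_le {f : ℝ → ℝ} {p : ℝ → Prop} {b : ℝ}
    (h : ∀ c > b, ∃ᶠ τ in atBot, p τ ∧ f τ < c) :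
    ∃ τs : ℕ → ℝ, StrictAnti τs ∧ Tendsto τs atTop atBot ∧
      limsup (fun n => (f (τs n) : EReal)) atTop ≤ b ∧ ∀ n, p (τs n) := by
  have hex (n : ℕ) : ∃ τ ≤ -(n : ℝ), p τ ∧ f τ < b + 1 / ((n : ℝ) + 1) :=
    frequently_atBot.1 (h _ (lt_add_of_pos_right b Nat.one_div_pos_of_nat)) _
  choose σ hσ hp hf using hex
  have hσ_atBot : Tendsto σ atTop atBot :=
    tendsto_atBot_mono hσ (tendsto_neg_atTop_atBot.comp tendsto_natCast_atTop_atTop)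
  obtain ⟨φ, hφ, hanti⟩ := strictMono_subseq_of_tendsto_atTop
    (tendsto_neg_atBot_atTop.comp hσ_atBot)
  have hbound : Tendsto (fun n : ℕ => ((b + 1 / ((n : ℝ) + 1) : ℝ) : EReal)) atTop (𝓝 b) := by
    refine (continuous_coe_real_ereal.tendsto b).comp ?_
    simpa using (tendsto_one_div_add_atTop_nhds_zero_nat (𝕜 := ℝ)).const_add b
  refine ⟨σ ∘ φ, fun m n hmn => neg_lt_neg_iff.1 (hanti hmn), hσ_atBot.comp hφ.tendsto_atTop,
    ?_, fun n => hp (φ n)⟩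
  rw [← (hbound.comp hφ.tendsto_atTop).limsup_eq]
  exact limsup_le_limsup (Eventually.of_forall fun n => EReal.coe_le_coe_iff.2 (hf (φ n)).le)

end Sequences

section Calculus

lemma nonneg_of_isLocalMin_of_hasDerivAt {f f' : ℝ → ℝ} {f'' t : ℝ} (hmin : IsLocalMin f t)
    (hf : ∀ᶠ x in 𝓝 t, HasDerivAt f (f' x) x) (hf' : HasDerivAt f' f'' t) : 0 ≤ f'' := by
  by_contra! hneg
  have hderiv : deriv f =ᶠ[𝓝 t] f' := hf.mono fun x hx => hx.deriv
  have hderiv2 : deriv (deriv f) t = f'' := hderiv.deriv_eq.trans hf'.deriv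
  have hmax : IsLocalMax f t := isLocalMax_of_deriv_deriv_neg (by rwa [hderiv2])
    hmin.deriv_eq_zero hf.self_of_nhds.continuousAt
  have hconst : f =ᶠ[𝓝 t] fun _ => f t := by
    filter_upwards [hmin, hmax] with x hle hge using le_antisymm hge hle
  have hzero : deriv (deriv f) t = 0 := by
    rw [hconst.deriv.deriv_eq]
    simp
  exact hneg.ne (hderiv2.symm.trans hzero)

lemma tendsto_atBot_of_hasDerivAt_le {f g f' g' : ℝ → ℝ} (hf : ∀ᶠ τ in atBot, HasDerivAt f (f' τ) τ)
    (hg : ∀ᶠ τ in atBot, HasDerivAt g (g' τ) τ) (hle : ∀ᶠ τ in atBot, g' τ ≤ f' τ)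
    (hlim : Tendsto g atBot atBot) : Tendsto f atBot atBot := by
  obtain ⟨T, hT⟩ := eventually_atBot.1 (hf.and (hg.and hle))
  have hd : ∀ τ ≤ T, HasDerivAt (fun τ => f τ - g τ) (f' τ - g' τ) τ := fun τ hτ =>
    (hT τ hτ).1.fun_sub (hT τ hτ).2.1
  have hmono : MonotoneOn (fun τ => f τ - g τ) (Iic T) := by
    refine monotoneOn_of_hasDerivWithinAt_nonneg (convex_Iic T)
      (fun τ hτ => (hd τ hτ).continuousAt.continuousWithinAt)
      (fun τ hτ => (hd τ (mem_Iic.1 (interior_subset hτ))).hasDerivWithinAt)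
      fun τ hτ => sub_nonneg.2 (hT τ (mem_Iic.1 (interior_subset hτ))).2.2
  refine tendsto_atBot_mono' _ ?_ (tendsto_atBot_add_const_right _ (f T - g T) hlim)
  filter_upwards [eventually_le_atBot T] with τ hτ
  exact sub_le_iff_le_add'.1 (hmono hτ self_mem_Iic hτ)

lemma tendsto_mul_atTop_of_eventually_ge {α : Type*} {l : Filter α} {k u : α → ℝ} {δ : ℝ}
    (hδ : 0 < δ) (hk : ∀ᶠ x in l, δ ≤ k x) (hu : Tendsto u l atTop) :
    Tendsto (fun x => k x * u x) l atTop := by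
  refine tendsto_atTop_mono' l ?_ (hu.const_mul_atTop hδ)
  filter_upwards [hk, hu.eventually_ge_atTop 0] with x hkx hux
  exact mul_le_mul_of_nonneg_right hkx hux

/-- `g` is the derivative of `f` with respect to the clock `x`, i.e. `df/dx = g` along the curve
`τ ↦ (x τ, f τ)`. Changing the independent variable this way avoids inverting `x`. -/
def HasDerivWrt (x f g : ℝ → ℝ) : Prop :=
  ∀ τ, HasDerivAt f (deriv x τ * g τ) τ

namespace HasDerivWrt

variable {x f g f₀ f₁ f₂ f₃ : ℝ → ℝ}

lemma neg (h : HasDerivWrt x f g) : HasDerivWrt x (fun τ => -f τ) fun τ => -g τ := fun τ => by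
  simpa using (h τ).fun_neg

lemma tendsto_atBot (h : HasDerivWrt x f g) (hx : Tendsto x atBot atBot)
    (hx' : ∀ τ, 0 < deriv x τ) (hg : Tendsto g atBot atTop) : Tendsto f atBot atBot := by
  refine tendsto_atBot_of_hasDerivAt_le (Eventually.of_forall h) (Eventually.of_forall fun τ =>
    (differentiableAt_of_deriv_ne_zero (hx' τ).ne').hasDerivAt) ?_ hx
  filter_upwards [hg.eventually_ge_atTop 1] with τ hτ using le_mul_of_one_le_right (hx' τ).le hτ

lemma tendsto_atTop (h : HasDerivWrt x f g) (hx : Tendsto x atBot atBot)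
    (hx' : ∀ τ, 0 < deriv x τ) (hg : Tendsto g atBot atBot) : Tendsto f atBot atTop :=
  tendsto_neg_atBot_iff.1 (h.neg.tendsto_atBot hx hx' (tendsto_neg_atTop_iff.2 hg))

lemma tendsto_atBot_of_third (h₀ : HasDerivWrt x f₀ f₁) (h₁ : HasDerivWrt x f₁ f₂)
    (h₂ : HasDerivWrt x f₂ f₃) (hx : Tendsto x atBot atBot) (hx' : ∀ τ, 0 < deriv x τ)
    (h₃ : Tendsto f₃ atBot atTop) : Tendsto f₀ atBot atBot :=
  h₀.tendsto_atBot hx hx' (h₁.tendsto_atTop hx hx' (h₂.tendsto_atBot hx hx' h₃))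

lemma tendsto_atTop_of_third (h₀ : HasDerivWrt x f₀ f₁) (h₁ : HasDerivWrt x f₁ f₂)
    (h₂ : HasDerivWrt x f₂ f₃) (hx : Tendsto x atBot atBot) (hx' : ∀ τ, 0 < deriv x τ)
    (h₃ : Tendsto f₃ atBot atBot) : Tendsto f₀ atBot atTop :=
  h₀.tendsto_atTop hx hx' (h₁.tendsto_atBot hx hx' (h₂.tendsto_atTop hx hx' h₃))

end HasDerivWrt

end Calculus

section Interpolation

variable {f f' f'' f''' : ℝ → ℝ} {s t M : ℝ}

lemma exists_abs_hasDerivAt_le (hst : s < t) (hf : ∀ τ ∈ Icc s t, HasDerivAt f (f' τ) τ)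
    (hs : |f s| ≤ M) (ht : |f t| ≤ M) : ∃ ξ ∈ Ioo s t, |f' ξ| ≤ 2 * M / (t - s) := by
  obtain ⟨ξ, hξ, hslope⟩ := exists_hasDerivAt_eq_slope f f' hst
    (fun τ hτ => (hf τ hτ).continuousAt.continuousWithinAt)
    fun τ hτ => hf τ (Ioo_subset_Icc_self hτ)
  have hts : 0 < t - s := sub_pos.2 hst
  refine ⟨ξ, hξ, ?_⟩
  rw [hslope, abs_div, abs_of_pos hts]
  gcongr
  linarith [abs_sub (f t) (f s)]

lemma abs_le_abs_add_of_abs_hasDerivAt_le {C u v : ℝ}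
    (hf : ∀ τ ∈ Icc s t, HasDerivAt f (f' τ) τ) (hC : ∀ τ ∈ Icc s t, |f' τ| ≤ C)
    (hu : u ∈ Icc s t) (hv : v ∈ Icc s t) : |f v| ≤ |f u| + C * (t - s) := by
  have hC0 : 0 ≤ C := (abs_nonneg _).trans (hC u hu)
  have hlip : |f v - f u| ≤ C * |v - u| :=
    (convex_Icc s t).norm_image_sub_le_of_norm_hasDerivWithin_le
      (fun τ hτ => (hf τ hτ).hasDerivWithinAt) hC hu hv
  have hdist : C * |v - u| ≤ C * (t - s) := by
    gcongr
    exact abs_sub_le_of_le_of_le hv.1 hv.2 hu.1 hu.2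
  linarith [abs_sub_abs_le_abs_sub (f v) (f u)]

lemma exists_abs_first_le_and_exists_abs_second_le
    (hf : ∀ τ ∈ Icc t (t + 1), HasDerivAt f (f' τ) τ)
    (hf' : ∀ τ ∈ Icc t (t + 1), HasDerivAt f' (f'' τ) τ)
    (hM : ∀ τ ∈ Icc t (t + 1), |f τ| ≤ M) :
    (∃ u ∈ Icc t (t + 1), |f' u| ≤ 6 * M) ∧ ∃ w ∈ Icc t (t + 1), |f'' w| ≤ 36 * M := by
  have hthird {r : ℝ} (hr : t ≤ r) (hr' : r + 1 / 3 ≤ t + 1) :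
      ∃ u ∈ Ioo r (r + 1 / 3), |f' u| ≤ 6 * M := by
    obtain ⟨u, hu, hle⟩ := exists_abs_hasDerivAt_le (by linarith : r < r + 1 / 3)
      (fun τ hτ => hf τ ⟨hr.trans hτ.1, hτ.2.trans hr'⟩) (hM r ⟨hr, by linarith⟩)
      (hM (r + 1 / 3) ⟨by linarith, hr'⟩)
    exact ⟨u, hu, hle.trans_eq (by ring)⟩
  obtain ⟨u, hu, hfu⟩ := hthird le_rfl (by linarith)
  obtain ⟨v, hv, hfv⟩ := hthird (r := t + 2 / 3) (by linarith) (by linarith)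
  have hgap : 1 / 3 ≤ v - u := by linarith [hu.2, hv.1]
  have hsub : Icc u v ⊆ Icc t (t + 1) := Icc_subset_Icc hu.1.le (by linarith [hv.2])
  obtain ⟨w, hw, hfw⟩ := exists_abs_hasDerivAt_le (by linarith) (fun τ hτ => hf' τ (hsub hτ))
    hfu hfv
  have hM0 : 0 ≤ M := by linarith [abs_nonneg (f' u)]
  refine ⟨⟨u, hsub (left_mem_Icc.2 (by linarith)), hfu⟩, w, hsub (Ioo_subset_Icc_self hw),
    hfw.trans ?_⟩
  rw [div_le_iff₀ (by linarith)]
  nlinarith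

lemma abs_first_add_abs_second_le {B κ : ℝ} (hκ0 : 0 ≤ κ) (hκ : κ < 1 / 2)
    (hf : ∀ τ ∈ Icc t (t + 1), HasDerivAt f (f' τ) τ)
    (hf' : ∀ τ ∈ Icc t (t + 1), HasDerivAt f' (f'' τ) τ)
    (hf'' : ∀ τ ∈ Icc t (t + 1), HasDerivAt f'' (f''' τ) τ)
    (hM : ∀ τ ∈ Icc t (t + 1), |f τ| ≤ M)
    (hB : ∀ τ ∈ Icc t (t + 1), |f''' τ| ≤ B + κ * (|f' τ| + |f'' τ|))
    {τ : ℝ} (hτ : τ ∈ Icc t (t + 1)) :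
    |f' τ| + |f'' τ| ≤ (78 * M + 2 * B) / (1 - 2 * κ) := by
  obtain ⟨⟨u, hu, hfu⟩, w, hw, hfw⟩ := exists_abs_first_le_and_exists_abs_second_le hf hf' hM
  have hcont : ContinuousOn (fun τ => |f' τ| + |f'' τ|) (Icc t (t + 1)) := fun τ hτ =>
    ((hf' τ hτ).continuousAt.abs.add (hf'' τ hτ).continuousAt.abs).continuousWithinAt
  obtain ⟨m, hm, hmax⟩ := isCompact_Icc.exists_isMaxOn ⟨u, hu⟩ hcont
  set N := |f' m| + |f'' m|
  have hN : ∀ τ ∈ Icc t (t + 1), |f' τ| + |f'' τ| ≤ N := fun τ hτ => hmax hτ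
  have hthird_le : ∀ τ ∈ Icc t (t + 1), |f''' τ| ≤ B + κ * N := fun τ hτ =>
    (hB τ hτ).trans (by gcongr; exact hN τ hτ)
  have hsecond_le : ∀ τ ∈ Icc t (t + 1), |f'' τ| ≤ 36 * M + (B + κ * N) := fun τ hτ => by
    linarith [abs_le_abs_add_of_abs_hasDerivAt_le hf'' hthird_le hw hτ]
  have hfirst_le : |f' m| ≤ 42 * M + (B + κ * N) := by
    linarith [abs_le_abs_add_of_abs_hasDerivAt_le hf' hsecond_le hu hm]
  have habsorb : N ≤ 78 * M + 2 * B + 2 * κ * N := by linarith [hsecond_le m hm]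
  rw [le_div_iff₀ (by linarith)]
  nlinarith [hN τ hτ]

end Interpolation

open Real

section Coefficients

/-- The ninth root of `cos θ`, in terms of which every power in system (D) is an integral one. -/
noncomputable def cosRoot (θ : ℝ) : ℝ :=
  cos θ ^ (1 / 9 : ℝ)

variable {θ : ℝ}

lemma cosRoot_pos (h : 0 < cos θ) : 0 < cosRoot θ :=
  rpow_pos_of_pos h _

lemma cosRoot_le_one (h : 0 ≤ cos θ) : cosRoot θ ≤ 1 :=
  rpow_le_one h (cos_le_one θ) (by norm_num)

lemma cos_rpow_div_nine (h : 0 ≤ cos θ) (n : ℕ) : cos θ ^ ((n : ℝ) / 9) = cosRoot θ ^ n := by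
  rw [cosRoot, ← rpow_mul_natCast h, one_div_mul_eq_div]

lemma cos_eq_cosRoot_pow (h : 0 ≤ cos θ) : cos θ = cosRoot θ ^ 9 := by
  simp [← cos_rpow_div_nine h]

lemma sin_sq_eq_one_sub_cosRoot_pow (h : 0 ≤ cos θ) : sin θ ^ 2 = 1 - cosRoot θ ^ 18 := by
  rw [sin_sq, cos_eq_cosRoot_pow h, ← pow_mul]

lemma hasDerivAt_cosRoot (h : 0 < cos θ) :
    HasDerivAt cosRoot (-(1 / 9) * sin θ / cosRoot θ ^ 8) θ := by
  have hpow : cos θ ^ ((1 : ℝ) / 9 - 1) = (cosRoot θ ^ 8)⁻¹ := by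
    rw [← cos_rpow_div_nine h.le, ← rpow_neg h.le]
    norm_num
  refine ((hasDerivAt_cos θ).rpow_const (Or.inl h.ne')).congr_deriv ?_
  rw [hpow]
  ring

lemma one_add_tan_sq_eq (h : 0 < cos θ) : 1 + tan θ ^ 2 = 1 / cosRoot θ ^ 18 := by
  rw [eq_one_div_of_mul_eq_one_left (one_add_tan_sq_mul_cos_sq_eq_one h.ne'),
    cos_eq_cosRoot_pow h.le, ← pow_mul]

lemma dPsi_eq_cosRoot (a Φ W Ψ : ℝ) (h : 0 ≤ cos θ) :
    dPsi a Φ W Ψ θ = 1 / Φ ^ 3 - 1 - (a - 1) * cosRoot θ ^ 18 -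
      ((16 / 3 * sin θ - 224 / 27 * sin θ ^ 3) * cosRoot θ ^ 51 * Φ
        + (208 / 81 * sin θ ^ 2 - 10 / 9) * cosRoot θ ^ 34 * W
        + 2 / 3 * sin θ * cosRoot θ ^ 17 * Ψ) := by
  have h51 : cos θ ^ ((17 : ℝ) / 3) = cosRoot θ ^ 51 := by
    rw [← cos_rpow_div_nine h]
    norm_num
  have h34 : cos θ ^ ((34 : ℝ) / 9) = cosRoot θ ^ 34 := mod_cast cos_rpow_div_nine h 34
  have h17 : cos θ ^ ((17 : ℝ) / 9) = cosRoot θ ^ 17 := mod_cast cos_rpow_div_nine h 17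
  rw [dPsi, h51, h34, h17, cos_eq_cosRoot_pow h, ← pow_mul]

lemma abs_dPsi_le (a W Ψ : ℝ) {Φ : ℝ} (hΦ : 0 < Φ) (h : 0 ≤ cos θ) :
    |dPsi a Φ W Ψ θ| ≤
      1 / Φ ^ 3 + 1 + |a - 1| + 14 * Φ + 2 * cos θ * (|W| + |Ψ|) := by
  have hpow {e : ℝ} (he : 1 ≤ e) : |cos θ ^ e| ≤ cos θ := by
    rw [abs_of_nonneg (rpow_nonneg h e)]
    exact rpow_le_self_of_le_one h (cos_le_one θ) he
  have hsin := abs_sin_le_one θ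
  have hsin3 : |sin θ ^ 3| ≤ 1 := by
    rw [abs_pow]
    exact pow_le_one₀ (abs_nonneg _) hsin
  have hcoeffΦ : |16 / 3 * sin θ - 224 / 27 * sin θ ^ 3| ≤ 14 := by
    rw [abs_le] at hsin hsin3 ⊢
    constructor <;> linarith
  have hcoeffW : |208 / 81 * sin θ ^ 2 - 10 / 9| ≤ 2 := by
    rw [abs_le]
    constructor <;> linarith [sin_sq_le_one θ, sq_nonneg (sin θ)]
  have hcoeffΨ : |2 / 3 * sin θ| ≤ 2 := by
    rw [abs_le] at hsin ⊢
    constructor <;> linarith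
  have htermΦ : |(16 / 3 * sin θ - 224 / 27 * sin θ ^ 3) * cos θ ^ ((17 : ℝ) / 3) * Φ| ≤
      14 * 1 * Φ := by
    rw [abs_mul, abs_mul, abs_of_pos hΦ]
    gcongr
    exact (hpow (by norm_num)).trans (cos_le_one θ)
  have htermW : |(208 / 81 * sin θ ^ 2 - 10 / 9) * cos θ ^ ((34 : ℝ) / 9) * W| ≤
      2 * cos θ * |W| := by
    rw [abs_mul, abs_mul]
    gcongr
    exact hpow (by norm_num)
  have htermΨ : |2 / 3 * sin θ * cos θ ^ ((17 : ℝ) / 9) * Ψ| ≤ 2 * cos θ * |Ψ| := by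
    rw [abs_mul, abs_mul]
    gcongr
    exact hpow (by norm_num)
  have hforcing : |(a - 1) * cos θ ^ 2| ≤ |a - 1| := by
    rw [abs_mul, abs_sq]
    exact mul_le_of_le_one_right (abs_nonneg _) (cos_sq_le_one θ)
  have hΦ3 : 0 < 1 / Φ ^ 3 := by positivity
  rw [dPsi]
  rw [abs_le] at *
  constructor <;> linarith

end Coefficients

section ThinFilm

/-- The thin-film height `H = (cos θ)^(2/3) Φ`. -/
noncomputable def filmHeight (Φ θ : ℝ) : ℝ :=
  cosRoot θ ^ 6 * Φ

/-- The slope `dH/dx` of the thin-film height with respect to `x = tan θ`, along solutions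
of (D). -/
noncomputable def filmSlope (Φ W θ : ℝ) : ℝ :=
  W / cosRoot θ ^ 2 - 2 / 3 * sin θ * cosRoot θ ^ 15 * Φ

/-- The second derivative `d²H/dx²` of the thin-film height with respect to `x = tan θ`, along
solutions of (D). -/
noncomputable def filmCurvature (Φ W Ψ θ : ℝ) : ℝ :=
  Ψ / cosRoot θ ^ 10 - 4 / 9 * sin θ * cosRoot θ ^ 7 * W - 2 / 3 * cosRoot θ ^ 42 * Φ
    + 10 / 9 * sin θ ^ 2 * cosRoot θ ^ 24 * Φ

namespace SolD

variable {a : ℝ} {Φ W Ψ θ : ℝ → ℝ}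

lemma hasDerivAt_theta (h : SolD a Φ W Ψ θ) {τ : ℝ} (hcos : 0 ≤ cos (θ τ)) :
    HasDerivAt θ (cosRoot (θ τ) ^ 26) τ := by
  rw [← cos_rpow_div_nine hcos]
  exact_mod_cast (h τ).2.2.2

lemma hasDerivAt_sin_theta (h : SolD a Φ W Ψ θ) {τ : ℝ} (hcos : 0 ≤ cos (θ τ)) :
    HasDerivAt (fun τ => sin (θ τ)) (cosRoot (θ τ) ^ 35) τ := by
  refine (h.hasDerivAt_theta hcos).sin.congr_deriv ?_
  rw [cos_eq_cosRoot_pow hcos, ← pow_add]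

lemma hasDerivAt_cosRoot_theta (h : SolD a Φ W Ψ θ) {τ : ℝ} (hcos : 0 < cos (θ τ)) :
    HasDerivAt (fun τ => cosRoot (θ τ)) (-(1 / 9) * sin (θ τ) * cosRoot (θ τ) ^ 18) τ := by
  refine ((hasDerivAt_cosRoot hcos).comp τ (h.hasDerivAt_theta hcos.le)).congr_deriv ?_
  have := (cosRoot_pos hcos).ne'
  field_simp

lemma hasDerivAt_tan_theta (h : SolD a Φ W Ψ θ) {τ : ℝ} (hcos : 0 < cos (θ τ)) :
    HasDerivAt (fun τ => tan (θ τ)) (cosRoot (θ τ) ^ 8) τ := by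
  refine ((hasDerivAt_tan hcos.ne').comp τ (h.hasDerivAt_theta hcos.le)).congr_deriv ?_
  have := (cosRoot_pos hcos).ne'
  rw [cos_eq_cosRoot_pow hcos.le]
  field_simp

lemma continuous_height (h : SolD a Φ W Ψ θ) : Continuous Φ :=
  continuous_iff_continuousAt.2 fun τ => (h τ).1.continuousAt

lemma eq_zero_and_nonneg_of_isLocalMin (h : SolD a Φ W Ψ θ) {τ : ℝ} (hmin : IsLocalMin Φ τ) :
    W τ = 0 ∧ 0 ≤ Ψ τ :=
  ⟨hmin.hasDerivAt_eq_zero (h τ).1, nonneg_of_isLocalMin_of_hasDerivAt hmin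
    (Eventually.of_forall fun σ => (h σ).1) (h τ).2.1⟩

lemma deriv_tan_theta_pos (h : SolD a Φ W Ψ θ) (hcos : ∀ τ, 0 < cos (θ τ)) (τ : ℝ) :
    0 < deriv (fun τ => tan (θ τ)) τ := by
  rw [(h.hasDerivAt_tan_theta (hcos τ)).deriv]
  exact pow_pos (cosRoot_pos (hcos τ)) 8

lemma tendsto_tan_theta (h : SolD a Φ W Ψ θ) (hcos : ∀ τ, 0 < cos (θ τ)) :
    Tendsto (fun τ => tan (θ τ)) atBot atBot := by
  -- The clock `x` slows down like `cosRoot ^ 8`, but `d(x + x³/3)/dτ = cosRoot⁻¹⁰ ≥ 1`.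
  have hcubic : Tendsto (fun τ => tan (θ τ) + tan (θ τ) ^ 3 / 3) atBot atBot := by
    refine tendsto_atBot_of_hasDerivAt_le (f' := fun τ => 1 / cosRoot (θ τ) ^ 10)
      (Eventually.of_forall fun τ => ?_) (Eventually.of_forall hasDerivAt_id')
      (Eventually.of_forall fun τ => ?_) tendsto_id
    · have htan := h.hasDerivAt_tan_theta (hcos τ)
      refine (htan.fun_add ((htan.fun_pow 3).div_const 3)).congr_deriv ?_
      have := (cosRoot_pos (hcos τ)).ne'
      calc _ = cosRoot (θ τ) ^ 8 * (1 + tan (θ τ) ^ 2) := by push_cast; ring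
        _ = _ := by rw [one_add_tan_sq_eq (hcos τ)]; field_simp
    · exact one_le_one_div (pow_pos (cosRoot_pos (hcos τ)) 10)
        (pow_le_one₀ (cosRoot_pos (hcos τ)).le (cosRoot_le_one (hcos τ).le))
  refine tendsto_atBot.2 fun K => ?_
  filter_upwards [hcubic.eventually_le_atBot (K + K ^ 3 / 3)] with τ hτ
  by_contra! hK
  have hcube : K ^ 3 < tan (θ τ) ^ 3 := (by decide : Odd 3).strictMono_pow hK
  linarith

lemma tendsto_one_add_tan_theta_sq (h : SolD a Φ W Ψ θ) (hcos : ∀ τ, 0 < cos (θ τ)) :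
    Tendsto (fun τ => 1 + tan (θ τ) ^ 2) atBot atTop := by
  have htan := h.tendsto_tan_theta hcos
  simpa only [sq] using tendsto_atTop_add_const_left _ 1 (htan.atBot_mul_atBot₀ htan)

lemma tendsto_cos_theta (h : SolD a Φ W Ψ θ) (hcos : ∀ τ, 0 < cos (θ τ)) :
    Tendsto (fun τ => cos (θ τ)) atBot (𝓝 0) := by
  simpa only [Function.comp_def, inv_sqrt_one_add_tan_sq (hcos _)] using
    tendsto_inv_atTop_zero.comp
      (tendsto_sqrt_atTop.comp (h.tendsto_one_add_tan_theta_sq hcos))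

lemma hasDerivWrt_filmHeight (h : SolD a Φ W Ψ θ) (hcos : ∀ τ, 0 < cos (θ τ)) :
    HasDerivWrt (fun τ => tan (θ τ)) (fun τ => filmHeight (Φ τ) (θ τ))
      fun τ => filmSlope (Φ τ) (W τ) (θ τ) := fun τ => by
  have hq := h.hasDerivAt_cosRoot_theta (hcos τ)
  have := (cosRoot_pos (hcos τ)).ne'
  rw [(h.hasDerivAt_tan_theta (hcos τ)).deriv]
  refine ((hq.fun_pow 6).fun_mul (h τ).1).congr_deriv ?_
  simp only [filmSlope]
  field_simp
  push_cast
  ring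

lemma hasDerivWrt_filmSlope (h : SolD a Φ W Ψ θ) (hcos : ∀ τ, 0 < cos (θ τ)) :
    HasDerivWrt (fun τ => tan (θ τ)) (fun τ => filmSlope (Φ τ) (W τ) (θ τ))
      fun τ => filmCurvature (Φ τ) (W τ) (Ψ τ) (θ τ) := fun τ => by
  have hq := h.hasDerivAt_cosRoot_theta (hcos τ)
  have hs := h.hasDerivAt_sin_theta (hcos τ).le
  have hq0 := (cosRoot_pos (hcos τ)).ne'
  rw [(h.hasDerivAt_tan_theta (hcos τ)).deriv]
  refine (((h τ).2.1.fun_div (hq.fun_pow 2) (pow_ne_zero 2 hq0)).fun_sub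
    (((hs.const_mul (2 / 3)).fun_mul (hq.fun_pow 15)).fun_mul (h τ).1)).congr_deriv ?_
  simp only [filmCurvature]
  field_simp
  push_cast
  ring

-- The third derivative is `H⁻³ - x² - a`, with `H⁻³ = (1 + x²) Φ⁻³`.
lemma hasDerivWrt_filmCurvature (h : SolD a Φ W Ψ θ) (hcos : ∀ τ, 0 < cos (θ τ)) :
    HasDerivWrt (fun τ => tan (θ τ)) (fun τ => filmCurvature (Φ τ) (W τ) (Ψ τ) (θ τ))
      fun τ => (1 / Φ τ ^ 3 - 1) * (1 + tan (θ τ) ^ 2) + (1 - a) := fun τ => by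
  have hq := h.hasDerivAt_cosRoot_theta (hcos τ)
  have hs := h.hasDerivAt_sin_theta (hcos τ).le
  have hq0 := (cosRoot_pos (hcos τ)).ne'
  have hΨ := (h τ).2.2.1
  rw [dPsi_eq_cosRoot _ _ _ _ (hcos τ).le] at hΨ
  rw [(h.hasDerivAt_tan_theta (hcos τ)).deriv]
  refine ((((hΨ.fun_div (hq.fun_pow 10) (pow_ne_zero 10 hq0)).fun_sub
    (((hs.const_mul (4 / 9)).fun_mul (hq.fun_pow 7)).fun_mul (h τ).2.1)).fun_sub
    (((hq.fun_pow 42).const_mul (2 / 3)).fun_mul (h τ).1)).fun_add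
    ((((hs.fun_pow 2).const_mul (10 / 9)).fun_mul (hq.fun_pow 24)).fun_mul
      (h τ).1)).congr_deriv ?_
  simp only [one_add_tan_sq_eq (hcos τ)]
  have hsin2 := sin_sq_eq_one_sub_cosRoot_pow (hcos τ).le
  have hsin3 : sin (θ τ) ^ 3 = sin (θ τ) * (1 - cosRoot (θ τ) ^ 18) := by rw [← hsin2]; ring
  generalize 1 / Φ τ ^ 3 = F
  field_simp
  push_cast
  ring_nf
  simp only [hsin2, hsin3]
  ring

lemma frequently_height_lt (h : SolD a Φ W Ψ θ) (hΦ : ∀ τ, 0 < Φ τ)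
    (hcos : ∀ τ, 0 < cos (θ τ)) (hΦlim : ¬ Tendsto Φ atBot atTop) {c : ℝ} (hc : 1 < c) :
    ∃ᶠ τ in atBot, Φ τ < c := by
  refine fun hev => hΦlim ?_
  have hgap : 0 < 1 - 1 / c ^ 3 := by
    rw [sub_pos, div_lt_one (by positivity)]
    exact one_lt_pow₀ hc (by norm_num)
  have hforcing : Tendsto (fun τ => (1 / Φ τ ^ 3 - 1) * (1 + tan (θ τ) ^ 2)) atBot atBot := by
    rw [← tendsto_neg_atTop_iff]
    simp only [← neg_mul, neg_sub]
    refine tendsto_mul_atTop_of_eventually_ge hgap ?_ (h.tendsto_one_add_tan_theta_sq hcos)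
    filter_upwards [hev] with τ hτ
    have := not_lt.1 hτ
    gcongr
  have hH := (h.hasDerivWrt_filmHeight hcos).tendsto_atTop_of_third (h.hasDerivWrt_filmSlope hcos)
    (h.hasDerivWrt_filmCurvature hcos) (h.tendsto_tan_theta hcos) (h.deriv_tan_theta_pos hcos)
    (tendsto_atBot_add_const_right _ _ hforcing)
  exact tendsto_atTop_mono (fun τ => mul_le_of_le_one_left (hΦ τ).le
    (pow_le_one₀ (cosRoot_pos (hcos τ)).le (cosRoot_le_one (hcos τ).le))) hH

lemma frequently_lt_height (h : SolD a Φ W Ψ θ) (hΦ : ∀ τ, 0 < Φ τ)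
    (hcos : ∀ τ, 0 < cos (θ τ)) {c : ℝ} (hc : c < 1) : ∃ᶠ τ in atBot, c < Φ τ := by
  intro hev
  have hle : ∀ᶠ τ in atBot, Φ τ ≤ c := hev.mono fun τ hτ => not_lt.1 hτ
  have hc0 : 0 < c := hle.exists.elim fun τ hτ => (hΦ τ).trans_le hτ
  have hgap : 0 < 1 / c ^ 3 - 1 := by
    rw [sub_pos, one_lt_div (by positivity)]
    exact pow_lt_one₀ hc0.le hc (by norm_num)
  have hforcing : Tendsto (fun τ => (1 / Φ τ ^ 3 - 1) * (1 + tan (θ τ) ^ 2)) atBot atTop := by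
    refine tendsto_mul_atTop_of_eventually_ge hgap ?_ (h.tendsto_one_add_tan_theta_sq hcos)
    filter_upwards [hle] with τ hτ
    have := hΦ τ
    gcongr
  have hH := (h.hasDerivWrt_filmHeight hcos).tendsto_atBot_of_third (h.hasDerivWrt_filmSlope hcos)
    (h.hasDerivWrt_filmCurvature hcos) (h.tendsto_tan_theta hcos) (h.deriv_tan_theta_pos hcos)
    (tendsto_atTop_add_const_right _ _ hforcing)
  obtain ⟨τ, hτ⟩ := (hH.eventually_le_atBot 0).exists
  exact hτ.not_gt (mul_pos (pow_pos (cosRoot_pos (hcos τ)) 6) (hΦ τ))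

lemma exists_eventually_abs_add_abs_le (h : SolD a Φ W Ψ θ) (hcos : ∀ τ, 0 < cos (θ τ))
    {m M : ℝ} (hm : 0 < m) (hΦ : ∀ᶠ τ in atBot, Φ τ ∈ Icc m M) :
    ∃ C, ∀ᶠ τ in atBot, |W τ| + |Ψ τ| ≤ C := by
  have hcos_le : ∀ᶠ τ in atBot, cos (θ τ) ≤ 1 / 8 :=
    (h.tendsto_cos_theta hcos).eventually_le_const (by norm_num)
  obtain ⟨T, hT⟩ := eventually_atBot.1 (hΦ.and hcos_le)
  set B := 1 / m ^ 3 + 1 + |a - 1| + 14 * M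
  refine ⟨(78 * M + 2 * B) / (1 - 2 * (1 / 4)), ?_⟩
  filter_upwards [eventually_le_atBot (T - 1)] with t ht
  have hwindow : ∀ τ ∈ Icc t (t + 1), τ ≤ T := fun τ hτ => by linarith [hτ.2]
  refine abs_first_add_abs_second_le (f := Φ) (by norm_num) (by norm_num) (fun τ _ => (h τ).1)
    (fun τ _ => (h τ).2.1) (fun τ _ => (h τ).2.2.1) (fun τ hτ => ?_) (fun τ hτ => ?_)
    (left_mem_Icc.2 (by linarith))
  all_goals
    obtain ⟨⟨hmΦ, hΦM⟩, hcosτ⟩ := hT τ (hwindow τ hτ)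
    have hΦ0 : 0 < Φ τ := hm.trans_le hmΦ
  · rwa [abs_of_pos hΦ0]
  · calc |dPsi a (Φ τ) (W τ) (Ψ τ) (θ τ)|
        ≤ 1 / Φ τ ^ 3 + 1 + |a - 1| + 14 * Φ τ + 2 * cos (θ τ) * (|W τ| + |Ψ τ|) :=
          abs_dPsi_le a _ _ hΦ0 (hcos τ).le
      _ ≤ 1 / m ^ 3 + 1 + |a - 1| + 14 * M + 2 * (1 / 8) * (|W τ| + |Ψ τ|) := by gcongr
      _ = B + 1 / 4 * (|W τ| + |Ψ τ|) := by ring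

lemma frequently_isLocalMin_height_lt (h : SolD a Φ W Ψ θ) (hΦ : ∀ τ, 0 < Φ τ)
    (hcos : ∀ τ, 0 < cos (θ τ)) (hΦlim : ¬ Tendsto Φ atBot atTop)
    (hunbdd : ∀ C, ∃ᶠ τ in atBot, C < Φ τ + |W τ| + |Ψ τ|) {c : ℝ} (hc : 1 < c) :
    ∃ᶠ τ in atBot, IsLocalMin Φ τ ∧ Φ τ < c := by
  have hleave : ∃ᶠ τ in atBot, Φ τ < 1 / 2 ∨ c < Φ τ := by
    intro hev
    have hmem : ∀ᶠ τ in atBot, Φ τ ∈ Icc (1 / 2) c := hev.mono fun τ hτ => by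
      simpa only [mem_Icc, not_or, not_lt] using hτ
    obtain ⟨C, hC⟩ := h.exists_eventually_abs_add_abs_le hcos (by norm_num) hmem
    obtain ⟨τ, hlarge, hle, hτ⟩ := ((hunbdd (c + C)).and_eventually (hC.and hmem)).exists
    linarith [hτ.2]
  rcases frequently_or_distrib.1 hleave with hlow | hhigh
  · exact (frequently_atBot_isLocalMin_lt h.continuous_height hlow
      (h.frequently_lt_height hΦ hcos (by norm_num))).mono
      fun τ hτ => ⟨hτ.1, hτ.2.trans (by linarith)⟩
  · exact frequently_atBot_isLocalMin_lt h.continuous_height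
      (h.frequently_height_lt hΦ hcos hΦlim hc) hhigh

end SolD

end ThinFilm

/-- existence of a sequence of critical points going to `-∞` with
`limsup Φ(τₙ) ≤ 1`, `W(τₙ) = 0` and `Ψ(τₙ) ≥ 0`. -/
theorem exists_sequence_of_minima (a : ℝ) (Φ W Ψ θ : ℝ → ℝ)
    (hsol : SolD a Φ W Ψ θ)
    (hΦpos : ∀ τ : ℝ, 0 < Φ τ)
    (hθ : ∀ τ : ℝ, θ τ ∈ Set.Ioo (-(Real.pi / 2)) (Real.pi / 2))
    (hliminf : Filter.liminf (fun τ : ℝ => ((Φ τ : ℝ) : EReal)) atBot < ⊤)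
    (hlimsup : Filter.limsup (fun τ : ℝ => ((Φ τ + |W τ| + |Ψ τ| : ℝ) : EReal)) atBot = ⊤) :
    ∃ τs : ℕ → ℝ, StrictAnti τs ∧ Tendsto τs atTop atBot ∧
      Filter.limsup (fun n : ℕ => ((Φ (τs n) : ℝ) : EReal)) atTop ≤ (1 : EReal) ∧
      (∀ n : ℕ, W (τs n) = 0 ∧ 0 ≤ Ψ (τs n)) := by
  have hcos (τ : ℝ) : 0 < cos (θ τ) := cos_pos_of_mem_Ioo (hθ τ)
  have hΦlim : ¬ Tendsto Φ atBot atTop := fun hlim =>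
    hliminf.ne (EReal.tendsto_coe_nhds_top_iff.2 hlim).liminf_eq
  have hunbdd (C : ℝ) : ∃ᶠ τ in atBot, C < Φ τ + |W τ| + |Ψ τ| :=
    (frequently_lt_of_lt_limsup isCobounded_le_of_bot (hlimsup ▸ EReal.coe_lt_top C)).mono
      fun _ hτ => EReal.coe_lt_coe_iff.1 hτ
  exact exists_strictAnti_seq_limsup_le fun c hc =>
    (hsol.frequently_isLocalMin_height_lt hΦpos hcos hΦlim hunbdd hc).mono
      fun _ hτ => ⟨hsol.eq_zero_and_nonneg_of_isLocalMin hτ.1, hτ.2⟩
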